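/- Let γ be the unit circle in ℂ and suppose S̃¹(z;t), S̃²(z;t) are smooth in parameters t = (t¹ₙ, t²ₙ) and continuous in z on γ, arising from solutions of the Hamiltonian ∂̄-problem so that the Hirota-type identity holds: for any two parameter directions δ, δ̃, the function δS¹·δ̃S² − δ̃S¹·δS² (with Sⁱ = Sⁱ₀ + S̃ⁱ, Sⁱ₀ = Σₙ tⁱₙ z^{n−1}) extends holomorphically to the unit disc. Then the one-form θ = (1/2πi)∮_γ (S̃² δS¹₀ − S̃¹ δS²₀) dz on the (finitely truncated) time space is closed: δθ = 0, i.e. ∂/∂t^a θ_b − ∂/∂t^b θ_a = 0 for all pairs of time variables a, b. -/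

import Mathlib

open Metric

/-- Partial derivative ∂/∂tₐ of a ℂ-valued function of finitely many (truncated) times. -/
noncomputable def ptd {d : ℕ} (a : Fin d) (F : (Fin d → ℝ) → ℂ) (t : Fin d → ℝ) : ℂ :=
  fderiv ℝ F t (Pi.single a 1)

open Filter Topology in
theorem aux_decay (f : ℂ → ℂ) (hf : DifferentiableOn ℂ f {z : ℂ | 1 < ‖z‖})
    (h0 : Tendsto f (Bornology.cobounded ℂ) (𝓝 0)) :
    ∃ C : ℝ, ∀ᶠ z in Bornology.cobounded ℂ, ‖f z‖ ≤ C * ‖z‖⁻¹ := by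
  classical
  set F : ℂ → ℂ := Function.update (fun w => f w⁻¹) 0 0 with hF
  have hlim : Tendsto (fun w => f w⁻¹) (𝓝[≠] 0) (𝓝 0) :=
    h0.comp tendsto_inv₀_nhdsNE_zero
  have hcont : ContinuousAt F 0 := by
    rw [hF, continuousAt_update_same]; exact hlim
  have hd : ∀ᶠ w in 𝓝[≠] (0:ℂ), DifferentiableAt ℂ F w := by
    have h1 : ∀ᶠ w in 𝓝[≠] (0:ℂ), ‖w‖ < 1 := by
      apply nhdsWithin_le_nhds
      have := Metric.ball_mem_nhds (0:ℂ) one_pos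
      filter_upwards [this] with w hw
      simpa using hw
    filter_upwards [h1, self_mem_nhdsWithin] with w hw hw0
    have hw0' : w ≠ 0 := hw0
    have hop : IsOpen {z : ℂ | 1 < ‖z‖} := isOpen_lt continuous_const continuous_norm
    have hmem : w⁻¹ ∈ {z : ℂ | 1 < ‖z‖} := by
      simp only [Set.mem_ofPred_eq, norm_inv]
      exact (one_lt_inv₀ (norm_pos_iff.2 hw0')).2 hw
    have h2 : DifferentiableAt ℂ (fun w => f w⁻¹) w :=
      DifferentiableAt.comp w ((hf _ hmem).differentiableAt (hop.mem_nhds hmem))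
        (differentiableAt_inv hw0')
    refine h2.congr_of_eventuallyEq ?_
    filter_upwards [isOpen_ne.mem_nhds hw0'] with y hy
    simp [hF, Function.update_of_ne hy]
  have han := Complex.analyticAt_of_differentiable_on_punctured_nhds_of_continuousAt hd hcont
  have hO := han.differentiableAt.isBigO_sub
  obtain ⟨C, hC⟩ := hO.bound
  refine ⟨C, ?_⟩
  have h3 := (tendsto_inv₀_cobounded (α := ℂ)).eventually hC
  have h4 : ∀ᶠ z : ℂ in Bornology.cobounded ℂ, z ≠ 0 := by
    filter_upwards [(hasBasis_cobounded_norm (E := ℂ)).mem_of_mem (i := 1) trivial] with z hz hz0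
    have hz' : 1 ≤ ‖z‖ := hz
    rw [hz0, norm_zero] at hz'
    linarith
  filter_upwards [h3, h4] with z hz hz0
  have : F z⁻¹ = f z := by
    simp [hF, Function.update_of_ne (inv_ne_zero hz0)]
  rw [this] at hz
  simpa [hF] using hz

open Filter Topology in
theorem aux_zero (f g : ℂ → ℂ) (hf : DifferentiableOn ℂ f {z : ℂ | 1 < ‖z‖})
    (hg : DifferentiableOn ℂ g {z : ℂ | 1 < ‖z‖})
    (hfc : Continuous f) (hgc : Continuous g)
    (f0 : Tendsto f (Bornology.cobounded ℂ) (𝓝 0))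
    (g0 : Tendsto g (Bornology.cobounded ℂ) (𝓝 0)) :
    (∮ z in C(0, 1), f z * g z) = 0 := by
  obtain ⟨C, hC⟩ := aux_decay f hf f0
  have hop : IsOpen {z : ℂ | 1 < ‖z‖} := isOpen_lt continuous_const continuous_norm
  have key : ∀ R : ℝ, 1 ≤ R → (∮ z in C(0, R), f z * g z) = ∮ z in C(0, 1), f z * g z := by
    intro R hR
    refine Complex.circleIntegral_eq_of_differentiable_on_annulus_off_countable one_pos hR
      Set.countable_empty (hfc.mul hgc).continuousOn ?_
    intro z hz
    have hz1 : z ∈ {z : ℂ | 1 < ‖z‖} := by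
      have := hz.1.2
      simpa using this
    exact ((hf z hz1).differentiableAt (hop.mem_nhds hz1)).mul
      ((hg z hz1).differentiableAt (hop.mem_nhds hz1))
  have hbd : ∀ ε > 0, ‖∮ z in C(0, 1), f z * g z‖ ≤ 2 * Real.pi * (|C| * ε) := by
    intro ε hε
    have hgε : ∀ᶠ z in Bornology.cobounded ℂ, ‖g z‖ ≤ ε := by
      have := g0.norm
      rw [norm_zero] at this
      exact this.eventually_le_const hε
    obtain ⟨r, -, hr⟩ := (hasBasis_cobounded_norm (E := ℂ)).eventually_iff.1 (hC.and hgε)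
    set R := max r 1 with hR
    have hR1 : 1 ≤ R := le_max_right _ _
    rw [← key R hR1]
    have hRpos : 0 < R := by linarith
    calc _ ≤ 2 * Real.pi * R * (|C| * R⁻¹ * ε) := by
          refine circleIntegral.norm_integral_le_of_norm_le_const hRpos.le ?_
          intro z hz
          have hzR : ‖z‖ = R := by simpa using hz
          have hh := hr (show z ∈ {x : ℂ | r ≤ ‖x‖} by
            rw [Set.mem_ofPred_eq, hzR]; exact le_max_left _ _)
          rw [norm_mul]
          have h1 : ‖f z‖ ≤ |C| * R⁻¹ := by
            refine hh.1.trans ?_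
            rw [hzR]
            gcongr
            exact le_abs_self C
          exact mul_le_mul h1 hh.2 (norm_nonneg _) (by positivity)
      _ = _ := by field_simp
  rw [← norm_eq_zero]
  refine le_antisymm ?_ (norm_nonneg _)
  have : Tendsto (fun ε : ℝ => 2 * Real.pi * (|C| * ε)) (𝓝[>] 0) (𝓝 (2 * Real.pi * (|C| * 0))) := by
    apply Tendsto.mono_left _ nhdsWithin_le_nhds
    exact Continuous.tendsto (by fun_prop) 0
  simp only [mul_zero] at this
  refine ge_of_tendsto this ?_
  filter_upwards [self_mem_nhdsWithin] with ε hε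
  exact hbd ε hε

theorem aux_hasFDeriv {d : ℕ} (G : ℂ → (Fin d → ℝ) → ℂ)
    (hG : Differentiable ℝ fun p : ℂ × (Fin d → ℝ) => G p.1 p.2) (z : ℂ) (t : Fin d → ℝ) :
    HasFDerivAt (fun t' => G z t') ((fderiv ℝ (fun p : ℂ × (Fin d → ℝ) => G p.1 p.2) (z, t)).comp
      (ContinuousLinearMap.inr ℝ ℂ (Fin d → ℝ))) t :=
  HasFDerivAt.comp (g := fun p : ℂ × (Fin d → ℝ) => G p.1 p.2) t
    (hG (z, t)).hasFDerivAt (hasFDerivAt_prodMk_right z t)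

theorem aux_ptd {d : ℕ} (G : ℂ → (Fin d → ℝ) → ℂ)
    (hG : Differentiable ℝ fun p : ℂ × (Fin d → ℝ) => G p.1 p.2) (a : Fin d)
    (z : ℂ) (t : Fin d → ℝ) :
    ptd a (fun t' => G z t') t =
      fderiv ℝ (fun p : ℂ × (Fin d → ℝ) => G p.1 p.2) (z, t) (0, Pi.single a 1) := by
  unfold ptd
  rw [(aux_hasFDeriv G hG z t).fderiv]
  simp

theorem aux_ptd_contDiff {d : ℕ} (G : ℂ → (Fin d → ℝ) → ℂ)
    (hG : ContDiff ℝ (⊤ : ℕ∞) fun p : ℂ × (Fin d → ℝ) => G p.1 p.2) (a : Fin d) :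
    ContDiff ℝ (⊤ : ℕ∞) fun p : ℂ × (Fin d → ℝ) => ptd a (fun t' => G p.1 t') p.2 := by
  have : (fun p : ℂ × (Fin d → ℝ) => ptd a (fun t' => G p.1 t') p.2) = fun p =>
      fderiv ℝ (fun p : ℂ × (Fin d → ℝ) => G p.1 p.2) p (0, Pi.single a 1) := by
    funext p
    exact aux_ptd G (hG.differentiable (by simp)) a p.1 p.2
  rw [this]
  exact (hG.fderiv_right (m := (⊤ : ℕ∞)) (by simp)).clm_apply contDiff_const

open MeasureTheory in
theorem aux_param0 {d : ℕ} (G : ℂ → (Fin d → ℝ) → ℂ)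
    (hG : ContDiff ℝ (⊤ : ℕ∞) fun p : ℂ × (Fin d → ℝ) => G p.1 p.2) (a : Fin d)
    (t : Fin d → ℝ) :
    DifferentiableAt ℝ (fun t' => ∮ z in C(0, 1), G z t') t ∧
    ptd a (fun t' => ∮ z in C(0, 1), G z t') t = ∮ z in C(0, 1), ptd a (fun t' => G z t') t := by
  have hGd := hG.differentiable (by simp)
  have hGc : Continuous fun p : ℂ × (Fin d → ℝ) => G p.1 p.2 := hG.continuous
  have hG'c := hG.continuous_fderiv (by simp)
  have hcm : Continuous (fun s : ℝ => deriv (circleMap 0 1) s) := by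
    simp only [deriv_circleMap]
    fun_prop
  set F' : (Fin d → ℝ) → ℝ → ((Fin d → ℝ) →L[ℝ] ℂ) := fun x s =>
    deriv (circleMap 0 1) s • ((fderiv ℝ (fun p : ℂ × (Fin d → ℝ) => G p.1 p.2)
      (circleMap 0 1 s, x)).comp (ContinuousLinearMap.inr ℝ ℂ (Fin d → ℝ))) with hF'
  have hF'c : Continuous fun q : ℝ × (Fin d → ℝ) => F' q.2 q.1 := by
    apply Continuous.smul (hcm.comp continuous_fst)
    apply Continuous.clm_comp _ continuous_const
    apply hG'c.comp
    exact ((continuous_circleMap 0 1).comp continuous_fst).prodMk continuous_snd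
  have hF'c0 : Continuous (F' t) := hF'c.comp (continuous_id.prodMk continuous_const)
  have hFc : ∀ x, Continuous fun s : ℝ => deriv (circleMap 0 1) s • G (circleMap 0 1 s) x := by
    intro x
    exact hcm.smul (hGc.comp ((continuous_circleMap 0 1).prodMk continuous_const))
  obtain ⟨C, hC⟩ := ((isCompact_uIcc (a := (0:ℝ)) (b := 2 * Real.pi)).prod
    (isCompact_closedBall t 1)).exists_bound_of_continuousOn hF'c.continuousOn
  have main := intervalIntegral.hasFDerivAt_integral_of_dominated_of_fderiv_le
    (𝕜 := ℝ) (μ := volume) (a := 0) (b := 2 * Real.pi) (x₀ := t) (bound := fun _ => C)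
    (F := fun x s => deriv (circleMap 0 1) s • G (circleMap 0 1 s) x) (F' := F')
    (Metric.closedBall_mem_nhds t one_pos)
    (Filter.Eventually.of_forall fun x => (hFc x).aestronglyMeasurable)
    ((hFc t).intervalIntegrable _ _)
    hF'c0.aestronglyMeasurable
    (Filter.Eventually.of_forall fun s hs x hx => hC (s, x) ⟨Set.uIoc_subset_uIcc hs, hx⟩)
    intervalIntegrable_const
    (Filter.Eventually.of_forall fun s _ x _ =>
      (aux_hasFDeriv G hGd (circleMap 0 1 s) x).fun_const_smul _)
  have e : (fun t' => ∮ z in C(0, 1), G z t') = fun x => ∫ s in (0:ℝ)..2 * Real.pi,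
    deriv (circleMap 0 1) s • G (circleMap 0 1 s) x := rfl
  refine ⟨main.differentiableAt, ?_⟩
  unfold ptd
  rw [e, main.fderiv, ContinuousLinearMap.intervalIntegral_apply (hF'c0.intervalIntegrable _ _)]
  unfold circleIntegral
  refine intervalIntegral.integral_congr fun s _ => ?_
  simp only [hF', (aux_hasFDeriv G hGd (circleMap 0 1 s) t).fderiv]
  rfl

theorem aux_param {d : ℕ} (G : ℂ → (Fin d → ℝ) → ℂ)
    (hG : ContDiff ℝ (⊤ : ℕ∞) fun p : ℂ × (Fin d → ℝ) => G p.1 p.2) (a : Fin d)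
    (t : Fin d → ℝ) :
    ptd a (fun t' => ∮ z in C(0, 1), G z t') t = ∮ z in C(0, 1), ptd a (fun t' => G z t') t :=
  (aux_param0 G hG a t).2

theorem aux_S {d : ℕ} (c : Fin d → ℂ) (G : (Fin d → ℝ) → ℂ) (t : Fin d → ℝ)
    (hG : DifferentiableAt ℝ G t) (a : Fin d) :
    ptd a (fun t' => (∑ b, (t' b : ℂ) * c b) + G t') t = c a + ptd a G t := by
  have h1 : HasFDerivAt (fun t' : Fin d → ℝ => ∑ b, (t' b : ℂ) * c b)
      (∑ b, c b • (Complex.ofRealCLM.comp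
        (ContinuousLinearMap.proj (R := ℝ) (φ := fun _ : Fin d => ℝ) b))) t := by
    refine HasFDerivAt.fun_sum fun b _ => ?_
    exact ((Complex.ofRealCLM.comp
        (ContinuousLinearMap.proj (R := ℝ) (φ := fun _ : Fin d => ℝ) b)).hasFDerivAt).mul_const (c b)
  unfold ptd
  rw [(h1.fun_add hG.hasFDerivAt).fderiv]
  simp [Pi.single_apply, apply_ite (fun r : ℝ => (r : ℂ))]

theorem aux_mul {d : ℕ} (c : ℂ) (G : (Fin d → ℝ) → ℂ) (t : Fin d → ℝ)
    (hG : DifferentiableAt ℝ G t) (a : Fin d) :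
    ptd a (fun t' => c * G t') t = c * ptd a G t := by
  unfold ptd
  rw [fderiv_const_mul hG]
  simp

theorem aux_lin {d : ℕ} (p q : ℂ) (G H : (Fin d → ℝ) → ℂ) (t : Fin d → ℝ)
    (hG : DifferentiableAt ℝ G t) (hH : DifferentiableAt ℝ H t) (a : Fin d) :
    ptd a (fun t' => G t' * p - H t' * q) t = ptd a G t * p - ptd a H t * q := by
  unfold ptd
  rw [((hG.hasFDerivAt.mul_const p).fun_sub (hH.hasFDerivAt.mul_const q)).fderiv]
  simp [mul_comm]

/-- on a finitely truncated time space, with Sⁱ = Sⁱ₀ + S̃ⁱ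
(Sⁱ₀(z,t) = Σ tⁱₙ z^{n−1}), S̃ⁱ holomorphic outside the unit disc and vanishing
at ∞, smooth in the times, and satisfying the Hirota-type property that
g_{ab}(z) = ∂ₐS¹∂_bS² − ∂_bS¹∂ₐS² is the boundary value of a function holomorphic
in the unit disc (all its nonnegative moments on the circle vanish), the one-form
θₐ = (1/2πi)∮(S̃² ∂ₐS¹₀ − S̃¹ ∂ₐS²₀)dz is closed: ∂ₐθ_b = ∂_bθₐ.
Here each time coordinate a carries a label idx a = (i, n): it is the time tⁱₙ. -/
theorem stmt10 {d : ℕ} (idx : Fin d → Fin 2 × ℕ) (hidx : ∀ a, 1 ≤ (idx a).2)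
    (St : Fin 2 → ℂ → (Fin d → ℝ) → ℂ)
    (hSt : ∀ i, ContDiff ℝ (⊤ : ℕ∞) fun p : ℂ × (Fin d → ℝ) => St i p.1 p.2)
    (hhol : ∀ i t, DifferentiableOn ℂ (fun z => St i z t) {z : ℂ | 1 < ‖z‖})
    (hinf : ∀ i t, Filter.Tendsto (fun z => St i z t) (Bornology.cobounded ℂ) (nhds 0))
    (S : Fin 2 → ℂ → (Fin d → ℝ) → ℂ)
    (hS : ∀ i z t, S i z t
      = (∑ a, if (idx a).1 = i then (t a : ℂ) * z ^ ((idx a).2 - 1) else 0) + St i z t)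
    (hHirota : ∀ (a b : Fin d) (t : Fin d → ℝ) (k : ℕ),
      (∮ z in C(0, 1), (ptd a (fun t' => S 0 z t') t * ptd b (fun t' => S 1 z t') t
        - ptd b (fun t' => S 0 z t') t * ptd a (fun t' => S 1 z t') t) * z ^ k) = 0)
    (θ : Fin d → (Fin d → ℝ) → ℂ)
    (hθ : ∀ a t, θ a t = (1 / (2 * Real.pi * Complex.I)) *
      ∮ z in C(0, 1),
        (St 1 z t * (if (idx a).1 = 0 then z ^ ((idx a).2 - 1) else 0)
          - St 0 z t * (if (idx a).1 = 1 then z ^ ((idx a).2 - 1) else 0))) :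
    ∀ (a b : Fin d) (t : Fin d → ℝ), ptd a (θ b) t = ptd b (θ a) t := by
  intro a b t
  set P : Fin 2 → Fin d → ℂ → ℂ := fun i c z =>
    if (idx c).1 = i then z ^ ((idx c).2 - 1) else 0 with hP
  have hPd : ∀ i c, Differentiable ℂ (P i c) := by
    intro i c
    simp only [hP]
    split_ifs <;> fun_prop
  have hPR : ∀ i c, ContDiff ℝ (⊤ : ℕ∞) (P i c) := by
    intro i c
    simp only [hP]
    split_ifs <;> fun_prop
  have hStd : ∀ i z t, DifferentiableAt ℝ (fun t' => St i z t') t := fun i z t =>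
    (aux_hasFDeriv (St i) ((hSt i).differentiable (by simp)) z t).differentiableAt
  have hStc : ∀ i t, Continuous fun z => St i z t := fun i t =>
    (hSt i).continuous.comp (continuous_id.prodMk continuous_const)
  set u : Fin 2 → Fin d → ℂ → ℂ := fun i c z => ptd c (fun t' => St i z t') t with hu
  have huc : ∀ i c, Continuous (u i c) := fun i c =>
    (aux_ptd_contDiff (St i) (hSt i) c).continuous.comp (continuous_id.prodMk continuous_const)
  have hSd : ∀ i c z, ptd c (fun t' => S i z t') t = P i c z + u i c z := by
    intro i c z
    have : (fun t' => S i z t') = fun t' : Fin d → ℝ => (∑ b, (t' b : ℂ) * P i b z) + St i z t' := by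
      funext t'
      rw [hS]
      simp only [hP, mul_ite, mul_zero]
    rw [this]
    exact aux_S (fun b => P i b z) (fun t' => St i z t') t (hStd i z t) c
  -- the product integrals vanish
  have hprod0 : ∀ s s', (∮ z in C(0, 1), St 0 z s * St 1 z s') = 0 := fun s s' =>
    aux_zero _ _ (hhol 0 s) (hhol 1 s') (hStc 0 s) (hStc 1 s') (hinf 0 s) (hinf 1 s')
  have hprod1 : ∀ c s s', (∮ z in C(0, 1), ptd c (fun t' => St 0 z t') s * St 1 z s') = 0 := by
    intro c s s'
    have h1 := aux_param (fun z t' => St 1 z s' * St 0 z t')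
      (((hSt 1).comp (contDiff_fst.prodMk contDiff_const)).mul (hSt 0)) c s
    have h2 : (fun t' => ∮ z in C(0, 1), St 1 z s' * St 0 z t') = fun _ => 0 := by
      funext t'
      refine Eq.trans ?_ (hprod0 t' s')
      simp only [mul_comm]
    rw [h2] at h1
    simp only [aux_mul _ _ _ (hStd 0 _ s)] at h1
    simp only [mul_comm (St 1 _ s')] at h1
    rw [← h1]
    simp [ptd]
  have hprod2 : ∀ c e, (∮ z in C(0, 1), u 0 c z * u 1 e z) = 0 := by
    intro c e
    have h1 := aux_param (fun z t' => u 0 c z * St 1 z t')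
      (((aux_ptd_contDiff (St 0) (hSt 0) c).comp
        (contDiff_fst.prodMk (contDiff_const (c := t)))).mul (hSt 1)) e t
    have h2 : (fun t' => ∮ z in C(0, 1), u 0 c z * St 1 z t') = fun _ => 0 := by
      funext t'
      exact hprod1 c t t'
    rw [h2] at h1
    simp only [aux_mul _ _ _ (hStd 1 _ t)] at h1
    rw [← h1]
    simp [ptd]
  have hPP : ∀ c e, (∮ z in C(0, 1), P 0 c z * P 1 e z) = 0 := by
    intro c e
    refine Complex.circleIntegral_eq_zero_of_differentiable_on_off_countable zero_le_one
      Set.countable_empty ((hPd 0 c).mul (hPd 1 e)).continuous.continuousOn ?_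
    intro z _
    exact ((hPd 0 c).mul (hPd 1 e)) z
  have hPc : ∀ i c, Continuous (P i c) := fun i c => (hPd i c).continuous
  -- derivative of theta
  have hθd : ∀ c e, ptd c (θ e) t = (1 / (2 * Real.pi * Complex.I)) *
      ∮ z in C(0, 1), (u 1 c z * P 0 e z - u 0 c z * P 1 e z) := by
    intro c e
    have hGs : ContDiff ℝ (⊤ : ℕ∞) fun p : ℂ × (Fin d → ℝ) =>
        St 1 p.1 p.2 * P 0 e p.1 - St 0 p.1 p.2 * P 1 e p.1 :=
      ((hSt 1).mul ((hPR 0 e).comp contDiff_fst)).sub ((hSt 0).mul ((hPR 1 e).comp contDiff_fst))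
    have h1 := aux_param (fun z t' => St 1 z t' * P 0 e z - St 0 z t' * P 1 e z) hGs c t
    have h2 : θ e = fun t' => (1 / (2 * Real.pi * Complex.I)) *
        ∮ z in C(0, 1), (St 1 z t' * P 0 e z - St 0 z t' * P 1 e z) := by
      funext t'
      exact hθ e t'
    have h3 := (aux_param0 (fun z t' => St 1 z t' * P 0 e z - St 0 z t' * P 1 e z) hGs c t).1
    rw [h2, aux_mul _ _ _ h3, h1]
    simp only [aux_lin _ _ _ _ _ (hStd 1 _ t) (hStd 0 _ t)]
    rfl
  have ci : ∀ {f : ℂ → ℂ}, Continuous f → CircleIntegrable f 0 1 := fun h =>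
    h.continuousOn.circleIntegrable zero_le_one
  have hH := hHirota a b t 0
  simp only [hSd, pow_zero, mul_one] at hH
  have hexp : ∀ z, (P 0 a z + u 0 a z) * (P 1 b z + u 1 b z)
      - (P 0 b z + u 0 b z) * (P 1 a z + u 1 a z) =
      (P 0 a z * P 1 b z - P 0 b z * P 1 a z) + (u 0 a z * u 1 b z - u 0 b z * u 1 a z)
      + ((u 1 b z * P 0 a z - u 0 b z * P 1 a z) - (u 1 a z * P 0 b z - u 0 a z * P 1 b z)) := by
    intro z; ring
  simp only [hexp] at hH
  rw [circleIntegral.integral_add (ci (by fun_prop)) (ci (by fun_prop)),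
    circleIntegral.integral_add (ci (by fun_prop)) (ci (by fun_prop)),
    circleIntegral.integral_sub (ci (by fun_prop)) (ci (by fun_prop)),
    circleIntegral.integral_sub (ci (by fun_prop)) (ci (by fun_prop)),
    circleIntegral.integral_sub (ci (by fun_prop)) (ci (by fun_prop)),
    hPP, hPP, hprod2, hprod2] at hH
  simp only [sub_zero, zero_add, add_zero] at hH
  rw [hθd, hθd, sub_eq_zero.1 hH]
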